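/- Let S ⊂ ℝ^k be a halfspace and let Σ ⊆ S be an additive semigroup containing 0. Then the maximal ideal space M(APW^k_Σ) of the Banach algebra APW^k_Σ is a contractible topological space. -/

import Mathlib

/- Almost periodic functions of `k` real variables, their Bohr-Fourier
coefficients and spectra, the Wiener algebra, and halfspaces. -/

open MeasureTheory Filter BoundedContinuousFunction

noncomputable section

/-- The Banach algebra of bounded continuous functions `ℝ^k → ℂ` (sup norm). -/
abbrev APB (k : ℕ) := BoundedContinuousFunction (Fin k → ℝ) ℂ

/-- The elementary exponential `e_λ(x) = e^{i⟨λ,x⟩}` as a bounded continuous function. -/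
def apExp (k : ℕ) (lam : Fin k → ℝ) : APB k :=
  BoundedContinuousFunction.ofNormedAddCommGroup
    (fun x => Complex.exp (Complex.I * ((∑ j, lam j * x j : ℝ) : ℂ)))
    (by fun_prop) 1
    (fun x => by
      simp [Complex.norm_exp, Complex.mul_re])

/-- `AP^k`: the closed subalgebra of `L^∞`-type bounded continuous functions
generated by all exponentials `e_λ`, `λ ∈ ℝ^k`. -/
def APalg (k : ℕ) : Subalgebra ℂ (APB k) :=
  (Algebra.adjoin ℂ (Set.range (apExp k))).topologicalClosure

/-- The Bohr-Fourier coefficient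
`f_λ = lim_{T→∞} (2T)^{-k} ∫_{[-T,T]^k} e^{-i⟨λ,x⟩} f(x) dx`. -/
def bohrCoeff (k : ℕ) (f : (Fin k → ℝ) → ℂ) (lam : Fin k → ℝ) : ℂ :=
  limUnder atTop (fun T : ℝ =>
    (((2 * T) ^ k : ℝ) : ℂ)⁻¹ *
      ∫ x in Set.Icc (fun _ => -T : Fin k → ℝ) (fun _ => T),
        Complex.exp (-(Complex.I * ((∑ j, lam j * x j : ℝ) : ℂ))) * f x)

/-- The Bohr-Fourier spectrum `σ(f) = {λ : f_λ ≠ 0}`. -/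
def bohrSpectrum (k : ℕ) (f : (Fin k → ℝ) → ℂ) : Set (Fin k → ℝ) :=
  {lam | bohrCoeff k f lam ≠ 0}

/-- Membership in `AP^k_Δ = {f ∈ AP^k : σ(f) ⊆ Δ}`. -/
def APmem (k : ℕ) (Δ : Set (Fin k → ℝ)) (f : APB k) : Prop :=
  f ∈ APalg k ∧ bohrSpectrum k ⇑f ⊆ Δ

/-- Membership in the Wiener algebra `APW^k_Δ`: almost periodic with spectrum
in `Δ` and absolutely convergent Bohr-Fourier series. -/
def APWmem (k : ℕ) (Δ : Set (Fin k → ℝ)) (f : APB k) : Prop :=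
  APmem k Δ f ∧ Summable (fun lam => ‖bohrCoeff k (⇑f) lam‖)

/-- The Wiener norm `‖f‖_W = ∑_λ |f_λ|`. -/
def wienerNorm (k : ℕ) (f : (Fin k → ℝ) → ℂ) : ℝ :=
  ∑' lam, ‖bohrCoeff k f lam‖

/-- A halfspace `S ⊂ ℝ^k`: `ℝ^k = S ∪ (-S)`, `S ∩ (-S) = {0}`, and `S` is
closed under addition and under multiplication by nonnegative reals. -/
structure IsHalfspace (k : ℕ) (S : Set (Fin k → ℝ)) : Prop where
  union : S ∪ -S = Set.univ
  inter : S ∩ -S = {0}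
  add_mem : ∀ x ∈ S, ∀ y ∈ S, x + y ∈ S
  smul_mem : ∀ x ∈ S, ∀ a : ℝ, 0 ≤ a → a • x ∈ S

/- The maximal ideal space of a subalgebra of bounded continuous functions,
realized as the set of nonzero multiplicative linear functionals on the given
carrier set, with the weak* (pointwise convergence) topology. -/

/-- The maximal ideal space of the (sub)algebra with carrier `Sset`: nonzero
multiplicative linear functionals `φ : Sset → ℂ`.  The topology (weak*) is the
subspace topology of pointwise convergence. -/
def apCharacters (k : ℕ) (Sset : Set (APB k)) : Set (↥Sset → ℂ) :=
  {φ | φ ≠ 0 ∧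
    (∀ (f g : ↥Sset) (h : (f : APB k) + (g : APB k) ∈ Sset),
      φ ⟨(f : APB k) + (g : APB k), h⟩ = φ f + φ g) ∧
    (∀ (c : ℂ) (f : ↥Sset) (h : c • (f : APB k) ∈ Sset),
      φ ⟨c • (f : APB k), h⟩ = c * φ f) ∧
    (∀ (f g : ↥Sset) (h : (f : APB k) * (g : APB k) ∈ Sset),
      φ ⟨(f : APB k) * (g : APB k), h⟩ = φ f * φ g)}

/-!
Bohr-Fourier series identify `APW^k_Δ` with the convolution algebra `ℓ¹(Δ, ℂ)`, whose characters are
the semicharacters of `Δ` into the closed unit disc, with pointwise convergence. These form a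
topological monoid, so a path from the constant semicharacter `1` to an absorbing element, here the
indicator function of `{0}`, contracts the whole space by multiplication. The absorbing element is
reached in stages. A linear functional `l ≠ 0` that is nonnegative on a salient cone containing `Δ`
gives the path of semicharacters `t ^ l λ`, which runs from `1` at `t = 1` to the indicator function
of the face `{l = 0}` at `t = 0`; that face generates a salient cone in a space of smaller
dimension, where the construction is repeated.
-/

section Semicharacters

open scoped unitInterval

theorem contractibleSpace_of_joined_one {X : Type*} [TopologicalSpace X] [MulOneClass X]
    [ContinuousMul X] {z : X} (hz : ∀ x, z * x = z) (h : Joined 1 z) : ContractibleSpace X := by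
  obtain ⟨γ⟩ := h
  rw [contractible_iff_id_nullhomotopic]
  exact ⟨z, ⟨{
    toFun := fun p => γ p.1 * p.2
    map_zero_left := fun x => by simp
    map_one_left := fun x => by simp [hz] }⟩⟩

/-- The unital semicharacters of an additive monoid with values in the closed unit disc, as a
topological monoid under pointwise multiplication and pointwise convergence. -/
def unitSemicharacters (M : Type*) [AddMonoid M] : Submonoid (M → ℂ) where
  carrier := {χ | χ 0 = 1 ∧ (∀ x y, χ (x + y) = χ x * χ y) ∧ ∀ x, ‖χ x‖ ≤ 1}
  one_mem' := by simp
  mul_mem' := by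
    rintro χ ψ ⟨hχ0, hχadd, hχ⟩ ⟨hψ0, hψadd, hψ⟩
    refine ⟨by simp [hχ0, hψ0], fun x y => ?_, fun x => ?_⟩
    · simp only [Pi.mul_apply, hχadd, hψadd, mul_mul_mul_comm]
    · simpa only [Pi.mul_apply, norm_mul] using mul_le_one₀ (hχ x) (norm_nonneg _) (hψ x)

namespace unitSemicharacters

variable {M : Type*} [AddMonoid M]

instance : CoeFun (unitSemicharacters M) fun _ => M → ℂ := ⟨Subtype.val⟩

open Classical in
/-- Extension of a semicharacter by zero from a face `F` of an additive monoid. -/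
def extendZero {F : AddSubmonoid M} (hF : ∀ x y, x + y ∈ F → x ∈ F ∧ y ∈ F)
    (χ : unitSemicharacters F) : unitSemicharacters M :=
  ⟨fun x => if h : x ∈ F then χ ⟨x, h⟩ else 0, by
    refine ⟨(dif_pos F.zero_mem).trans χ.2.1, fun x y => ?_, fun x => ?_⟩
    · beta_reduce
      by_cases h : x ∈ F ∧ y ∈ F
      · rw [dif_pos h.1, dif_pos h.2, dif_pos (F.add_mem h.1 h.2)]
        exact χ.2.2.1 ⟨x, h.1⟩ ⟨y, h.2⟩
      · rw [dif_neg (mt (hF x y) h)]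
        rcases not_and_or.1 h with h | h <;> simp only [h, not_false_eq_true, dif_neg,
          zero_mul, mul_zero]
    · beta_reduce
      split_ifs with h
      · exact χ.2.2.2 ⟨x, h⟩
      · simp⟩

theorem extendZero_apply_of_mem {F : AddSubmonoid M} (hF : ∀ x y, x + y ∈ F → x ∈ F ∧ y ∈ F)
    (χ : unitSemicharacters F) {x : M} (hx : x ∈ F) : extendZero hF χ x = χ ⟨x, hx⟩ :=
  dif_pos hx

theorem extendZero_apply_of_notMem {F : AddSubmonoid M} (hF : ∀ x y, x + y ∈ F → x ∈ F ∧ y ∈ F)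
    (χ : unitSemicharacters F) {x : M} (hx : x ∉ F) : extendZero hF χ x = 0 :=
  dif_neg hx

theorem continuous_extendZero {F : AddSubmonoid M} (hF : ∀ x y, x + y ∈ F → x ∈ F ∧ y ∈ F) :
    Continuous (extendZero hF) := by
  refine Continuous.subtype_mk (continuous_pi fun x => ?_) _
  by_cases hx : x ∈ F
  · simp only [hx, dif_pos]
    exact (continuous_apply _).comp continuous_subtype_val
  · simpa only [hx, dif_neg, not_false_eq_true] using continuous_const

theorem mem_mker_of_add_mem_mker {l : M →+ ℝ} (hl : ∀ x, 0 ≤ l x) (x y : M)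
    (h : x + y ∈ AddMonoidHom.mker l) : x ∈ AddMonoidHom.mker l ∧ y ∈ AddMonoidHom.mker l := by
  simp only [AddMonoidHom.mem_mker, map_add] at h ⊢
  exact (add_eq_zero_iff_of_nonneg (hl x) (hl y)).1 h

/-- The semicharacter `x ↦ t ^ l x` attached to a nonnegative additive functional `l`; at `t = 0`
the convention `0 ^ 0 = 1` makes it the indicator function of the kernel of `l`. -/
def rpow {l : M →+ ℝ} (hl : ∀ x, 0 ≤ l x) (t : I) : unitSemicharacters M :=
  ⟨fun x => ((t : ℝ) ^ l x : ℝ), by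
    refine ⟨by simp, fun x y => ?_, fun x => ?_⟩
    · beta_reduce
      rw [map_add, Real.rpow_add_of_nonneg t.2.1 (hl x) (hl y), Complex.ofReal_mul]
    · rw [Complex.norm_real, Real.norm_of_nonneg (Real.rpow_nonneg t.2.1 _)]
      exact Real.rpow_le_one t.2.1 t.2.2 (hl x)⟩

theorem continuous_rpow {l : M →+ ℝ} (hl : ∀ x, 0 ≤ l x) : Continuous (rpow hl) :=
  Continuous.subtype_mk (continuous_pi fun x => Complex.continuous_ofReal.comp
    ((Real.continuous_rpow_const (hl x)).comp continuous_subtype_val)) _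

theorem rpow_one {l : M →+ ℝ} (hl : ∀ x, 0 ≤ l x) : rpow hl 1 = 1 :=
  Subtype.ext <| funext fun x => by simp [rpow]

theorem rpow_zero {l : M →+ ℝ} (hl : ∀ x, 0 ≤ l x) :
    rpow hl 0 = extendZero (mem_mker_of_add_mem_mker hl) 1 := by
  refine Subtype.ext (funext fun x => ?_)
  by_cases hx : x ∈ AddMonoidHom.mker l
  · rw [extendZero_apply_of_mem _ _ hx]
    simp [rpow, AddMonoidHom.mem_mker.1 hx]
  · rw [extendZero_apply_of_notMem _ _ hx]
    simp [rpow, Real.zero_rpow (mt AddMonoidHom.mem_mker.2 hx)]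

theorem joined_one_extendZero_one {l : M →+ ℝ} (hl : ∀ x, 0 ≤ l x) :
    Joined 1 (extendZero (mem_mker_of_add_mem_mker hl) 1) :=
  ⟨{ toFun := fun t => rpow hl (unitInterval.symm t)
     continuous_toFun := (continuous_rpow hl).comp unitInterval.continuous_symm
     source' := by rw [unitInterval.symm_zero, rpow_one]
     target' := by rw [unitInterval.symm_one, rpow_zero] }⟩

end unitSemicharacters

section Cone

variable {E : Type*} [NormedAddCommGroup E] [NormedSpace ℝ E] [FiniteDimensional ℝ E]

theorem eq_univ_of_convex_of_dense {s : Set E} (hs : Convex ℝ s) (hd : Dense s) : s = Set.univ := by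
  have hspan : affineSpan ℝ s = ⊤ := by
    rw [← AffineSubspace.coe_eq_univ_iff,
      ← (AffineSubspace.closed_of_finiteDimensional _).closure_eq]
    exact (hd.mono (subset_affineSpan ℝ s)).closure_eq
  have hint := hs.interior_closure_eq_interior_of_nonempty_interior
    (hs.interior_nonempty_iff_affineSpan_eq_top.2 hspan)
  rw [hd.closure_eq, interior_univ] at hint
  exact Set.univ_subset_iff.1 (hint.trans_subset interior_subset)

theorem exists_ne_zero_nonneg_of_salient [Nontrivial E] {C : PointedCone ℝ E}
    (hC : (C : ConvexCone ℝ E).Salient) : ∃ l : StrongDual ℝ E, l ≠ 0 ∧ ∀ x ∈ C, 0 ≤ l x := by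
  have hne : closure (C : Set E) ≠ Set.univ := fun h => by
    have huniv := eq_univ_of_convex_of_dense C.convex (dense_iff_closure_eq.2 h)
    obtain ⟨x, hx⟩ := exists_ne (0 : E)
    exact hC x (Set.eq_univ_iff_forall.1 huniv x) hx (Set.eq_univ_iff_forall.1 huniv (-x))
  obtain ⟨x₀, hx₀⟩ := (Set.ne_univ_iff_exists_notMem _).1 hne
  obtain ⟨l, hl, hlx₀⟩ := ProperCone.hyperplane_separation_point
    (Submodule.closure C : ProperCone ℝ E) hx₀
  refine ⟨l, fun h => ?_, fun x hx => hl x (subset_closure hx)⟩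
  simp [h] at hlx₀

end Cone

namespace unitSemicharacters

theorem exists_joined_one_of_salient {E M : Type*} [NormedAddCommGroup E] [NormedSpace ℝ E]
    [FiniteDimensional ℝ E] [AddMonoid M] {C : PointedCone ℝ E}
    (hC : (C : ConvexCone ℝ E).Salient) (j : M →+ E) (hj : ∀ x, j x ∈ C) :
    ∃ δ : unitSemicharacters M, (∀ x, j x ≠ 0 → δ x = 0) ∧ Joined 1 δ := by
  induction h : Module.finrank ℝ E using Nat.strong_induction_on generalizing E M with
  | _ n ih => ?_
  rcases subsingleton_or_nontrivial E with hE | hE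
  · exact ⟨1, fun x hx => (hx (Subsingleton.elim _ _)).elim, Joined.refl 1⟩
  obtain ⟨l, hl0, hl⟩ := exists_ne_zero_nonneg_of_salient hC
  set V := LinearMap.ker (l : E →ₗ[ℝ] ℝ)
  set lj : M →+ ℝ := (l : E →+ ℝ).comp j
  have hlj : ∀ x, 0 ≤ lj x := fun x => hl _ (hj x)
  have hmem : ∀ x : AddMonoidHom.mker lj, j x ∈ V := fun x => x.2
  have hlt : Module.finrank ℝ V < n := by
    rw [← h]
    refine Submodule.finrank_lt fun htop => hl0 ?_
    ext x
    exact LinearMap.mem_ker.1 (htop ▸ Submodule.mem_top : x ∈ V)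
  obtain ⟨δ, hδ, hjoin⟩ := ih _ hlt (C := C.comap V.subtype)
    (fun x hx hx0 => hC _ hx (by simpa using hx0))
    ((j.comp (AddMonoidHom.mker lj).subtype).codRestrict V hmem) (fun x => hj x) rfl
  refine ⟨extendZero (mem_mker_of_add_mem_mker hlj) δ, fun x hx => ?_,
    (joined_one_extendZero_one hlj).trans (hjoin.map (continuous_extendZero _))⟩
  by_cases hxl : x ∈ AddMonoidHom.mker lj
  · rw [extendZero_apply_of_mem _ _ hxl]
    exact hδ _ fun h0 => hx (congrArg Subtype.val h0)
  · exact extendZero_apply_of_notMem _ _ hxl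

theorem contractibleSpace_of_salient {E M : Type*} [NormedAddCommGroup E] [NormedSpace ℝ E]
    [FiniteDimensional ℝ E] [AddMonoid M] {C : PointedCone ℝ E}
    (hC : (C : ConvexCone ℝ E).Salient) {j : M →+ E} (hj : ∀ x, j x ∈ C)
    (hj0 : ∀ x, j x = 0 → x = 0) : ContractibleSpace (unitSemicharacters M) := by
  obtain ⟨δ, hδ, hjoin⟩ := exists_joined_one_of_salient hC j hj
  refine contractibleSpace_of_joined_one (fun χ => Subtype.ext (funext fun x => ?_)) hjoin
  by_cases hx : j x = 0
  · simp [hj0 x hx, δ.2.1, χ.2.1]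
  · simp [hδ x hx]

end unitSemicharacters

end Semicharacters

section UniformLimits

open scoped Uniformity Pointwise

theorem isClosed_exists_tendsto_of_equicontinuous {ι X α : Type*} [TopologicalSpace X]
    [UniformSpace α] [CompleteSpace α] {l : Filter ι} [l.NeBot] {F : ι → X → α}
    (hF : Equicontinuous F) : IsClosed {x | ∃ a, Tendsto (F · x) l (nhds a)} := by
  refine isClosed_of_closure_subset fun x hx =>
    CompleteSpace.complete (cauchy_map_iff'.2 fun U hU => ?_)
  obtain ⟨V, hV, hVsymm, hVU⟩ := comp_comp_symm_mem_uniformity_sets hU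
  obtain ⟨y, hy, a, ha⟩ := mem_closure_iff_nhds.1 hx _ (hF x V hV)
  have hcauchy : ∀ᶠ p in l ×ˢ l, (F p.1 y, F p.2 y) ∈ V := cauchy_map_iff'.1 ha.cauchy_map hV
  exact hcauchy.mono fun p hp => hVU ⟨F p.2 y, ⟨F p.1 y, hy p.1, hp⟩, SetRel.symm V (hy p.2)⟩

theorem totallyBounded_add {G : Type*} [AddGroup G] [UniformSpace G] [ContinuousAdd G]
    [CompleteSpace G] {s t : Set G} (hs : TotallyBounded s) (ht : TotallyBounded t) :
    TotallyBounded (s + t) :=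
  ((hs.closure.isCompact_of_isClosed isClosed_closure).add
    (ht.closure.isCompact_of_isClosed isClosed_closure)).totallyBounded.subset
    (Set.add_subset_add subset_closure subset_closure)

theorem isClosed_totallyBounded_range {ι X α : Type*} [TopologicalSpace X] [UniformSpace α]
    {F : ι → X → α} (hF : Equicontinuous F) :
    IsClosed {x | TotallyBounded (Set.range (F · x))} := by
  refine isClosed_of_closure_subset fun x hx U hU => ?_
  obtain ⟨V, hV, hVU⟩ := comp_mem_uniformity_sets hU
  obtain ⟨y, hy, htb⟩ := mem_closure_iff_nhds.1 hx _ (hF x V hV)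
  obtain ⟨t, ht, hcover⟩ := htb V hV
  refine ⟨t, ht, ?_⟩
  rintro _ ⟨i, rfl⟩
  obtain ⟨z, hz, hiz⟩ := Set.mem_iUnion₂.1 (hcover ⟨i, rfl⟩)
  exact Set.mem_iUnion₂.2 ⟨z, hz, hVU ⟨F i y, hy i, hiz⟩⟩

end UniformLimits

section Exponentials

variable {k : ℕ}

theorem apExp_apply (lam x : Fin k → ℝ) :
    apExp k lam x = Complex.exp (Complex.I * ((∑ j, lam j * x j : ℝ) : ℂ)) := rfl

theorem apExp_zero : apExp k 0 = 1 := by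
  ext x
  simp [apExp_apply]

theorem apExp_add (lam mu : Fin k → ℝ) : apExp k (lam + mu) = apExp k lam * apExp k mu := by
  ext x
  simp only [BoundedContinuousFunction.coe_mul, Pi.mul_apply, apExp_apply, ← Complex.exp_add,
    Pi.add_apply, add_mul, Finset.sum_add_distrib, Complex.ofReal_add, mul_add]

theorem star_apExp (lam : Fin k → ℝ) : star (apExp k lam) = apExp k (-lam) := by
  ext x
  simp [apExp_apply, ← Complex.exp_conj]

theorem norm_apExp_apply (lam x : Fin k → ℝ) : ‖apExp k lam x‖ = 1 := by
  simp [apExp_apply, Complex.norm_exp, Complex.mul_re]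

theorem norm_apExp (lam : Fin k → ℝ) : ‖apExp k lam‖ = 1 :=
  le_antisymm
    ((BoundedContinuousFunction.norm_le zero_le_one).2 fun x => (norm_apExp_apply lam x).le)
    ((norm_apExp_apply lam 0).ge.trans ((apExp k lam).norm_coe_le_norm 0))

theorem apExp_mem_APalg (lam : Fin k → ℝ) : apExp k lam ∈ APalg k :=
  Subalgebra.le_topologicalClosure _ (Algebra.subset_adjoin ⟨lam, rfl⟩)

theorem isClosed_APalg : IsClosed (APalg k : Set (APB k)) :=
  Subalgebra.isClosed_topologicalClosure _

theorem toSubmodule_adjoin_range_apExp :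
    Subalgebra.toSubmodule (Algebra.adjoin ℂ (Set.range (apExp k))) =
      Submodule.span ℂ (Set.range (apExp k)) := by
  let R : Submonoid (APB k) :=
    { carrier := Set.range (apExp k)
      mul_mem' := by
        rintro _ _ ⟨a, rfl⟩ ⟨b, rfl⟩
        exact ⟨a + b, apExp_add a b⟩
      one_mem' := ⟨0, apExp_zero⟩ }
  rw [Algebra.adjoin_eq_span, show Submonoid.closure (Set.range (apExp k)) = R from
    Submonoid.closure_eq R]
  rfl

@[elab_as_elim]
theorem APalg_induction {p : APB k → Prop} (hexp : ∀ lam, p (apExp k lam))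
    (hadd : ∀ f g, p f → p g → p (f + g)) (hsmul : ∀ (c : ℂ) f, p f → p (c • f))
    (hclosed : IsClosed {f | p f}) {f : APB k} (hf : f ∈ APalg k) : p f := by
  let P : Submodule ℂ (APB k) :=
    { carrier := {f | p f}
      add_mem' := fun {f g} => hadd f g
      zero_mem' := by simpa using hsmul 0 _ (hexp 0)
      smul_mem' := hsmul }
  have hle : Subalgebra.toSubmodule (Algebra.adjoin ℂ (Set.range (apExp k))) ≤ P := by
    rw [toSubmodule_adjoin_range_apExp]
    exact Submodule.span_le.2 (Set.range_subset_iff.2 hexp)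
  exact closure_minimal hle hclosed hf

theorem star_mem_APalg {f : APB k} (hf : f ∈ APalg k) : star f ∈ APalg k := by
  refine APalg_induction (fun lam => ?_) (fun f g hf hg => ?_) (fun c f hf => ?_) ?_ hf
  · rw [star_apExp]
    exact apExp_mem_APalg _
  · rw [star_add]
    exact add_mem hf hg
  · rw [star_smul]
    exact Subalgebra.smul_mem _ hf _
  · exact isClosed_APalg.preimage continuous_star

end Exponentials

section BoxAverage

variable {k : ℕ}

theorem integrableOn_box (T : ℝ) (f : APB k) :
    IntegrableOn f (Set.Icc (fun _ => -T : Fin k → ℝ) (fun _ => T)) :=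
  f.continuous.continuousOn.integrableOn_compact isCompact_Icc

theorem volume_real_box (T : ℝ) :
    volume.real (Set.Icc (fun _ => -T : Fin k → ℝ) (fun _ => T)) = max (2 * T) 0 ^ k := by
  simp [Measure.real, Real.volume_Icc_pi, two_mul, ENNReal.toReal_ofReal']

/-- The average over the box `[-T, T]^k` as a functional on bounded continuous functions; it is
zero if `T ≤ 0 < k`. -/
def boxAverage (k : ℕ) (T : ℝ) : APB k →L[ℂ] ℂ :=
  LinearMap.mkContinuous
    { toFun := fun f => (((2 * T) ^ k : ℝ) : ℂ)⁻¹ *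
        ∫ x in Set.Icc (fun _ => -T : Fin k → ℝ) (fun _ => T), f x
      map_add' := fun f g => by
        simp only [BoundedContinuousFunction.coe_add, Pi.add_apply, ← mul_add]
        rw [integral_add (integrableOn_box T f) (integrableOn_box T g)]
      map_smul' := fun c f => by
        simp only [BoundedContinuousFunction.coe_smul, smul_eq_mul, integral_const_mul,
          RingHom.id_apply, mul_left_comm] }
    1 fun f => by
      have hint := norm_setIntegral_le_of_norm_le_const (μ := volume)
        (s := Set.Icc (fun _ => -T : Fin k → ℝ) (fun _ => T)) isCompact_Icc.measure_lt_top
        (fun x _ => f.norm_coe_le_norm x)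
      have hvol : max (2 * T) 0 ^ k ≤ |(2 * T) ^ k| := by
        rw [abs_pow]
        exact pow_le_pow_left₀ (le_max_right _ _) (max_le (le_abs_self _) (abs_nonneg _)) k
      rw [volume_real_box] at hint
      simp only [LinearMap.coe_mk, AddHom.coe_mk, norm_mul, norm_inv, Complex.norm_real,
        Real.norm_eq_abs, one_mul]
      calc |(2 * T) ^ k|⁻¹ * ‖∫ x in Set.Icc (fun _ => -T : Fin k → ℝ) (fun _ => T), f x‖
          ≤ |(2 * T) ^ k|⁻¹ * (‖f‖ * |(2 * T) ^ k|) := by gcongr; exact hint.trans (by gcongr)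
        _ = ‖f‖ * (|(2 * T) ^ k|⁻¹ * |(2 * T) ^ k|) := by ring
        _ ≤ ‖f‖ := mul_le_of_le_one_right (norm_nonneg f) inv_mul_le_one

theorem boxAverage_apply (T : ℝ) (f : APB k) :
    boxAverage k T f = (((2 * T) ^ k : ℝ) : ℂ)⁻¹ *
      ∫ x in Set.Icc (fun _ => -T : Fin k → ℝ) (fun _ => T), f x := rfl

theorem equicontinuous_boxAverage : Equicontinuous fun T => ⇑(boxAverage k T) :=
  (LipschitzWith.uniformEquicontinuous _ 1 fun T => (boxAverage k T).lipschitz.weaken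
    (LinearMap.mkContinuous_norm_le _ zero_le_one _)).equicontinuous

theorem le_re_boxAverage {T : ℝ} (hT : 0 < T) {f : APB k} {c : ℝ} (h : ∀ x, c ≤ (f x).re) :
    c ≤ (boxAverage k T f).re := by
  have hpos : 0 < (2 * T) ^ k := by positivity
  have hmono := setIntegral_mono_on (μ := volume)
    (s := Set.Icc (fun _ => -T : Fin k → ℝ) (fun _ => T)) (f := fun _ => c)
    (g := fun x => (f x).re) (by simp [isCompact_Icc.measure_lt_top])
    (integrableOn_box T f).re measurableSet_Icc (fun x _ => h x)
  have hre : (∫ x in Set.Icc (fun _ => -T : Fin k → ℝ) (fun _ => T), f x).re =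
      ∫ x in Set.Icc (fun _ => -T : Fin k → ℝ) (fun _ => T), (f x).re :=
    (integral_re (integrableOn_box T f)).symm
  rw [setIntegral_const, smul_eq_mul, volume_real_box, max_eq_left (by positivity)] at hmono
  rwa [boxAverage_apply, ← Complex.ofReal_inv, Complex.re_ofReal_mul, hre, le_inv_mul_iff₀ hpos]

theorem tendsto_average_exp_zero :
    Tendsto (fun T : ℝ => ((2 * T : ℝ) : ℂ)⁻¹ *
      ∫ x in Set.Icc (-T) T, Complex.exp (Complex.I * ((0 * x : ℝ) : ℂ))) atTop (nhds 1) := by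
  refine tendsto_const_nhds.congr' ?_
  filter_upwards [eventually_gt_atTop 0] with T hT
  have hT0 : (T : ℂ) ≠ 0 := by exact_mod_cast hT.ne'
  have hvol : volume.real (Set.Icc (-T) T) = 2 * T := by
    rw [Real.volume_real_Icc_of_le (by linarith)]
    ring
  simp only [zero_mul, Complex.ofReal_zero, mul_zero, Complex.exp_zero, setIntegral_const, hvol,
    Complex.real_smul, mul_one]
  exact (inv_mul_cancel₀ (by simpa using hT0)).symm

theorem norm_integral_exp_le {a : ℝ} (ha : a ≠ 0) (x y : ℝ) :
    ‖∫ t in x..y, Complex.exp (Complex.I * ((a * t : ℝ) : ℂ))‖ ≤ 2 / |a| := by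
  have hmul : ∀ t : ℝ, Complex.I * ((a * t : ℝ) : ℂ) = (Complex.I * a) * t := fun t => by
    push_cast
    ring
  have hnorm : ∀ t : ℝ, ‖Complex.exp (Complex.I * a * t)‖ = 1 := fun t => by
    simp [Complex.norm_exp, Complex.mul_re]
  simp_rw [hmul]
  rw [integral_exp_mul_complex (by simpa using ha), norm_div, norm_mul, Complex.norm_I, one_mul,
    Complex.norm_real, Real.norm_eq_abs]
  gcongr
  calc _ ≤ ‖Complex.exp (Complex.I * a * y)‖ + ‖Complex.exp (Complex.I * a * x)‖ := norm_sub_le _ _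
    _ = 2 := by rw [hnorm, hnorm, one_add_one_eq_two]

theorem tendsto_average_exp_of_ne_zero {a : ℝ} (ha : a ≠ 0) :
    Tendsto (fun T : ℝ => ((2 * T : ℝ) : ℂ)⁻¹ *
      ∫ x in Set.Icc (-T) T, Complex.exp (Complex.I * ((a * x : ℝ) : ℂ))) atTop (nhds 0) := by
  have hinv : Tendsto (fun T : ℝ => ((2 * T : ℝ) : ℂ)⁻¹) atTop (nhds 0) := by
    have hreal : Tendsto (fun T : ℝ => (2 * T)⁻¹) atTop (nhds 0) :=
      tendsto_inv_atTop_zero.comp (tendsto_id.const_mul_atTop two_pos)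
    exact_mod_cast (Complex.continuous_ofReal.tendsto 0).comp hreal
  refine hinv.zero_mul_isBoundedUnder_le (isBoundedUnder_of_eventually_le (a := 2 / |a|) ?_)
  filter_upwards [eventually_ge_atTop 0] with T hT
  rw [Function.comp_apply, integral_Icc_eq_integral_Ioc,
    ← intervalIntegral.integral_of_le (by linarith)]
  exact norm_integral_exp_le ha _ _

theorem tendsto_boxAverage_apExp (lam : Fin k → ℝ) :
    Tendsto (fun T => boxAverage k T (apExp k lam)) atTop (nhds (if lam = 0 then 1 else 0)) := by
  have hone : ∀ a : ℝ, Tendsto (fun T : ℝ => ((2 * T : ℝ) : ℂ)⁻¹ *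
      ∫ x in Set.Icc (-T) T, Complex.exp (Complex.I * ((a * x : ℝ) : ℂ))) atTop
      (nhds (if a = 0 then 1 else 0)) := fun a => by
    split_ifs with ha
    · exact ha ▸ tendsto_average_exp_zero
    · exact tendsto_average_exp_of_ne_zero ha
  have hprod := tendsto_finsetProd Finset.univ fun j _ => hone (lam j)
  have hif : (∏ j, if lam j = 0 then (1 : ℂ) else 0) = if lam = 0 then 1 else 0 := by
    rw [Finset.prod_ite_zero]
    simp [funext_iff]
  rw [hif] at hprod
  refine hprod.congr fun T => ?_
  rw [boxAverage_apply, Finset.prod_mul_distrib, Finset.prod_const, Finset.card_univ,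
    Fintype.card_fin, inv_pow, ← Complex.ofReal_pow, ← Set.pi_univ_Icc, volume_pi,
    Measure.restrict_pi_pi, ← integral_fintype_prod_eq_prod]
  congr! 3
  rw [apExp_apply, ← Complex.exp_sum, Complex.ofReal_sum, Finset.mul_sum]

theorem exists_tendsto_boxAverage {f : APB k} (hf : f ∈ APalg k) :
    ∃ m, Tendsto (fun T => boxAverage k T f) atTop (nhds m) := by
  refine APalg_induction (fun lam => ⟨_, tendsto_boxAverage_apExp lam⟩) ?_ ?_
    (isClosed_exists_tendsto_of_equicontinuous equicontinuous_boxAverage) hf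
  · rintro f g ⟨a, ha⟩ ⟨b, hb⟩
    exact ⟨a + b, by simpa only [map_add] using ha.add hb⟩
  · rintro c f ⟨a, ha⟩
    exact ⟨c • a, by simpa only [map_smul] using ha.const_smul c⟩

theorem tendsto_boxAverage_map_zero {L : APB k →L[ℂ] APB k}
    (hL : ∀ lam, Tendsto (fun T => boxAverage k T (L (apExp k lam))) atTop (nhds 0))
    {f : APB k} (hf : f ∈ APalg k) :
    Tendsto (fun T => boxAverage k T (L f)) atTop (nhds 0) := by
  refine APalg_induction hL (fun f g hf hg => ?_) (fun c f hf => ?_) ?_ hf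
  · simpa only [map_add, add_zero] using hf.add hg
  · simpa only [map_smul, smul_zero] using hf.const_smul c
  · exact (equicontinuous_boxAverage.isClosed_setOfPred_tendsto continuous_const).preimage
      L.continuous

end BoxAverage

section BohrCoefficients

variable {k : ℕ}

theorem bohrCoeff_eq_limUnder (f : APB k) (lam : Fin k → ℝ) :
    bohrCoeff k f lam = limUnder atTop (fun T => boxAverage k T (apExp k (-lam) * f)) := by
  simp only [bohrCoeff, boxAverage_apply]
  congr! 6 with T x
  simp [apExp_apply]

theorem tendsto_boxAverage_bohrCoeff (lam : Fin k → ℝ) {f : APB k} (hf : f ∈ APalg k) :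
    Tendsto (fun T => boxAverage k T (apExp k (-lam) * f)) atTop (nhds (bohrCoeff k f lam)) := by
  rw [bohrCoeff_eq_limUnder]
  exact tendsto_nhds_limUnder
    (exists_tendsto_boxAverage ((APalg k).mul_mem (apExp_mem_APalg _) hf))

theorem bohrCoeff_apExp (lam mu : Fin k → ℝ) :
    bohrCoeff k (apExp k mu) lam = if mu = lam then 1 else 0 := by
  have h := tendsto_boxAverage_bohrCoeff lam (apExp_mem_APalg mu)
  rw [← apExp_add] at h
  rw [tendsto_nhds_unique h (tendsto_boxAverage_apExp _)]
  simp [neg_add_eq_zero, eq_comm]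

/-- The Bohr-Fourier coefficient at `lam` as a continuous linear functional on `AP^k`. -/
def bohrCoeffCLM (lam : Fin k → ℝ) : APalg k →L[ℂ] ℂ :=
  LinearMap.mkContinuous
    { toFun := fun f => bohrCoeff k f lam
      map_add' := fun f g => by
        refine tendsto_nhds_unique (tendsto_boxAverage_bohrCoeff lam (f + g).2) ?_
        simpa only [AddMemClass.coe_add, mul_add, map_add] using
          (tendsto_boxAverage_bohrCoeff lam f.2).add (tendsto_boxAverage_bohrCoeff lam g.2)
      map_smul' := fun c f => by
        refine tendsto_nhds_unique (tendsto_boxAverage_bohrCoeff lam (c • f).2) ?_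
        simpa only [SetLike.val_smul, mul_smul_comm, map_smul, RingHom.id_apply] using
          (tendsto_boxAverage_bohrCoeff lam f.2).const_smul c }
    1 fun f => le_of_tendsto (tendsto_boxAverage_bohrCoeff lam f.2).norm <| .of_forall fun T => by
      rw [one_mul]
      calc ‖boxAverage k T (apExp k (-lam) * f)‖
          ≤ 1 * ‖apExp k (-lam) * (f : APB k)‖ :=
            (boxAverage k T).le_of_opNorm_le (LinearMap.mkContinuous_norm_le _ zero_le_one _) _
        _ ≤ 1 * (1 * ‖(f : APB k)‖) := by grw [norm_mul_le, norm_apExp]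
        _ = ‖f‖ := by rw [one_mul, one_mul]; rfl

theorem bohrCoeffCLM_apply (lam : Fin k → ℝ) (f : APalg k) :
    bohrCoeffCLM lam f = bohrCoeff k f lam := rfl

end BohrCoefficients

section Uniqueness

variable {k : ℕ}

/-- Translation of bounded continuous functions by `s`. -/
def apTranslate (s : Fin k → ℝ) : APB k →L[ℂ] APB k :=
  LinearMap.mkContinuous
    { toFun := fun f => f.compContinuous ⟨fun x => x + s, by fun_prop⟩
      map_add' := fun _ _ => rfl
      map_smul' := fun _ _ => rfl }
    1 fun f => by
      rw [one_mul]
      exact (BoundedContinuousFunction.norm_le (norm_nonneg f)).2 fun x => f.norm_coe_le_norm _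

theorem apTranslate_apply (s : Fin k → ℝ) (f : APB k) (x : Fin k → ℝ) :
    apTranslate s f x = f (x + s) := rfl

theorem equicontinuous_apTranslate : Equicontinuous fun s : Fin k → ℝ => ⇑(apTranslate s) :=
  (LipschitzWith.uniformEquicontinuous _ 1 fun s => (apTranslate s).lipschitz.weaken
    (LinearMap.mkContinuous_norm_le _ zero_le_one _)).equicontinuous

theorem apTranslate_apExp (s lam : Fin k → ℝ) :
    apTranslate s (apExp k lam) = apExp k lam s • apExp k lam := by
  ext x
  simp only [apTranslate_apply, apExp_apply, BoundedContinuousFunction.coe_smul, smul_eq_mul,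
    ← Complex.exp_add, Pi.add_apply, mul_add, Finset.sum_add_distrib, Complex.ofReal_add]
  rw [add_comm]

theorem tendsto_boxAverage_apTranslate_sub (s : Fin k → ℝ) {f : APB k} (hf : f ∈ APalg k) :
    Tendsto (fun T => boxAverage k T (apTranslate s f - f)) atTop (nhds 0) := by
  have hL : ∀ g, (apTranslate s - ContinuousLinearMap.id ℂ (APB k)) g = apTranslate s g - g :=
    fun g => by rw [_root_.sub_apply, ContinuousLinearMap.id_apply]
  rw [← hL]
  refine tendsto_boxAverage_map_zero (fun lam => ?_) hf
  have hexp : apTranslate s (apExp k lam) - apExp k lam = (apExp k lam s - 1) • apExp k lam := by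
    rw [apTranslate_apExp, sub_smul, one_smul]
  have hlim := (tendsto_boxAverage_apExp lam).const_smul (apExp k lam s - 1)
  have hzero : (apExp k lam s - 1) • (if lam = 0 then (1 : ℂ) else 0) = 0 := by
    split_ifs with h
    · simp [h, apExp_zero]
    · exact smul_zero _
  simpa only [hL, hexp, map_smul, hzero] using hlim

theorem totallyBounded_range_apTranslate {f : APB k} (hf : f ∈ APalg k) :
    TotallyBounded (Set.range fun s => apTranslate s f) := by
  refine APalg_induction (fun lam => ?_) (fun f g hf hg => ?_) (fun c f hf => ?_)
    (isClosed_totallyBounded_range equicontinuous_apTranslate) hf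
  · have hc : IsCompact ((fun c : ℂ => c • apExp k lam) '' Metric.closedBall 0 1) :=
      (isCompact_closedBall 0 1).image (by fun_prop)
    refine hc.totallyBounded.subset ?_
    rintro _ ⟨s, rfl⟩
    exact ⟨apExp k lam s, by simp [norm_apExp_apply], (apTranslate_apExp s lam).symm⟩
  · refine (totallyBounded_add hf hg).subset ?_
    rintro _ ⟨s, rfl⟩
    exact ⟨_, ⟨s, rfl⟩, _, ⟨s, rfl⟩, (map_add (apTranslate s) f g).symm⟩
  · refine (hf.image (uniformContinuous_const_smul c)).subset ?_
    rintro _ ⟨s, rfl⟩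
    exact ⟨_, ⟨s, rfl⟩, (map_smul (apTranslate s) c f).symm⟩

theorem exists_finset_forall_dist_lt {f : APB k} (hf : f ∈ APalg k) (x₀ : Fin k → ℝ) {ε : ℝ}
    (hε : 0 < ε) : ∃ F : Finset (Fin k → ℝ), ∀ x, ∃ s ∈ F, dist (f (x + s)) (f x₀) < ε := by
  obtain ⟨t, hts, htf, hcover⟩ := Metric.finite_approx_of_totallyBounded
    (totallyBounded_range_apTranslate hf) ε hε
  choose! σ hσ using fun g (hg : g ∈ t) => hts hg
  classical
  refine ⟨htf.toFinset.image σ, fun x => ?_⟩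
  obtain ⟨g, hg, hdist⟩ := Set.mem_iUnion₂.1 (hcover ⟨x₀ - x, rfl⟩)
  refine ⟨σ g, Finset.mem_image_of_mem σ (htf.mem_toFinset.2 hg), ?_⟩
  rw [← hσ g hg] at hdist
  have := (BoundedContinuousFunction.dist_coe_le_dist x).trans_lt (Metric.mem_ball'.1 hdist)
  rwa [apTranslate_apply, apTranslate_apply, add_sub_cancel] at this

theorem re_eq_zero_of_tendsto_boxAverage_zero {f : APB k} (hf : f ∈ APalg k)
    (hnonneg : ∀ x, 0 ≤ (f x).re) (hmean : Tendsto (fun T => boxAverage k T f) atTop (nhds 0))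
    (x₀ : Fin k → ℝ) : (f x₀).re = 0 := by
  -- If `f x₀` were positive, a sum of finitely many translates of `f` would be bounded below by a
  -- positive constant, although its mean is still zero.
  by_contra hne
  have hpos : 0 < (f x₀).re := (hnonneg x₀).lt_of_ne' hne
  obtain ⟨F, hF⟩ := exists_finset_forall_dist_lt hf x₀ (half_pos hpos)
  have hlower : ∀ x, (f x₀).re / 2 ≤ ((∑ s ∈ F, apTranslate s f) x).re := fun x => by
    obtain ⟨s, hs, hdist⟩ := hF x
    have hre := (Complex.abs_re_le_norm _).trans_lt (dist_eq_norm (f (x + s)) (f x₀) ▸ hdist)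
    rw [Complex.sub_re] at hre
    rw [BoundedContinuousFunction.coe_sum, Finset.sum_apply, Complex.re_sum]
    calc (f x₀).re / 2 ≤ (apTranslate s f x).re := by
          rw [apTranslate_apply]
          linarith [(abs_lt.1 hre).1]
      _ ≤ ∑ s ∈ F, (apTranslate s f x).re :=
          Finset.single_le_sum (f := fun s => (apTranslate s f x).re)
            (fun s _ => hnonneg (x + s)) hs
  have hmeanF : Tendsto (fun T => boxAverage k T (∑ s ∈ F, apTranslate s f)) atTop (nhds 0) := by
    simpa [← Finset.sum_add_distrib] using tendsto_finsetSum F fun s _ =>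
      (tendsto_boxAverage_apTranslate_sub s hf).add hmean
  have hle := ge_of_tendsto ((Complex.continuous_re.tendsto 0).comp hmeanF)
    ((eventually_gt_atTop 0).mono fun T hT => le_re_boxAverage hT hlower)
  rw [Complex.zero_re] at hle
  linarith

theorem eq_zero_of_bohrCoeff_eq_zero {f : APB k} (hf : f ∈ APalg k)
    (h : ∀ lam, bohrCoeff k f lam = 0) : f = 0 := by
  have hmul : ∀ g ∈ APalg k, Tendsto (fun T => boxAverage k T (g * f)) atTop (nhds 0) := by
    refine fun g hg => tendsto_boxAverage_map_zero
      (L := (ContinuousLinearMap.mul ℂ (APB k)).flip f) (fun lam => ?_) hg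
    simpa only [neg_neg, h, ContinuousLinearMap.flip_apply, ContinuousLinearMap.mul_apply']
      using tendsto_boxAverage_bohrCoeff (-lam) hf
  have hsq : ∀ x, ((star f * f) x).re = ‖f x‖ ^ 2 := fun x => by
    rw [BoundedContinuousFunction.coe_mul, Pi.mul_apply, BoundedContinuousFunction.star_apply,
      RCLike.star_def, Complex.conj_mul']
    norm_cast
  ext x
  have hx := re_eq_zero_of_tendsto_boxAverage_zero ((APalg k).mul_mem (star_mem_APalg hf) hf)
    (fun x => (hsq x).symm ▸ sq_nonneg _) (hmul _ (star_mem_APalg hf)) x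
  rwa [hsq, sq_eq_zero_iff, norm_eq_zero] at hx

end Uniqueness

section LOneMonoidAlgebra

open scoped lp

/-- The space `ℓ¹(M, ℂ)`, regarded as the completed monoid algebra of an additive monoid `M`: its
multiplication is convolution. -/
def LOneMonoidAlgebra (M : Type*) : Type _ := ℓ¹(M, ℂ)

namespace LOneMonoidAlgebra

section NormedSpace

variable {M : Type*} {E : Type*} [NormedAddCommGroup E] [NormedSpace ℂ E]

instance : NormedAddCommGroup (LOneMonoidAlgebra M) := inferInstanceAs (NormedAddCommGroup ℓ¹(M, ℂ))

instance : NormedSpace ℂ (LOneMonoidAlgebra M) := inferInstanceAs (NormedSpace ℂ ℓ¹(M, ℂ))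

instance : CompleteSpace (LOneMonoidAlgebra M) := inferInstanceAs (CompleteSpace ℓ¹(M, ℂ))

instance : FunLike (LOneMonoidAlgebra M) M ℂ where
  coe a := a.1
  coe_injective := Subtype.val_injective

open Classical in
/-- The basis vector of `ℓ¹(M, ℂ)` at `x`. -/
def single (x : M) : LOneMonoidAlgebra M := lp.single 1 x (1 : ℂ)

open Classical in
theorem single_apply (x y : M) : single x y = if y = x then 1 else 0 :=
  Pi.single_apply x 1 y

theorem norm_single (x : M) : ‖single x‖ = 1 := by
  classical
  exact (lp.norm_single (E := fun _ : M => ℂ) zero_lt_one x 1).trans norm_one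

theorem hasSum_norm (a : LOneMonoidAlgebra M) : HasSum (fun x => ‖a x‖) ‖a‖ := by
  have h : HasSum (fun x => ‖a x‖ ^ ENNReal.toReal 1) (‖a‖ ^ ENNReal.toReal 1) :=
    lp.hasSum_norm (E := fun _ : M => ℂ) (by simp) a
  simpa only [ENNReal.toReal_one, Real.rpow_one] using h

theorem hasSum_single (a : LOneMonoidAlgebra M) : HasSum (fun x => a x • single x) a := by
  classical
  have hsmul : ∀ x, a x • single x = lp.single (E := fun _ : M => ℂ) 1 x (a x) := fun x => by
    rw [← mul_one (a x), ← smul_eq_mul, lp.single_smul, smul_eq_mul, mul_one]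
    rfl
  rw [funext hsmul]
  exact lp.hasSum_single (E := fun _ : M => ℂ) ENNReal.one_ne_top a

theorem map_eq_of_map_single_eq {L L' : LOneMonoidAlgebra M →L[ℂ] E}
    (h : ∀ x, L (single x) = L' (single x)) (a : LOneMonoidAlgebra M) : L a = L' a := by
  have hL : HasSum (fun x => a x • L (single x)) (L a) := by
    simpa only [Function.comp_def, map_smul] using (hasSum_single a).map L L.continuous
  have hL' : HasSum (fun x => a x • L' (single x)) (L' a) := by
    simpa only [Function.comp_def, map_smul] using (hasSum_single a).map L' L'.continuous
  exact hL.unique (by simpa only [h] using hL')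

variable [CompleteSpace E] {e : M → E}

theorem summable_smul (he : ∀ x, ‖e x‖ ≤ 1) (a : LOneMonoidAlgebra M) :
    Summable fun x => a x • e x :=
  .of_norm_bounded (hasSum_norm a).summable fun x => by
    rw [norm_smul]
    exact mul_le_of_le_one_right (norm_nonneg _) (he x)

/-- The continuous linear map `a ↦ ∑ x, a x • e x` that a family `e` in the unit ball of a Banach
space induces on `ℓ¹(M, ℂ)`. -/
def lift (e : M → E) (he : ∀ x, ‖e x‖ ≤ 1) : LOneMonoidAlgebra M →L[ℂ] E :=
  LinearMap.mkContinuous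
    { toFun := fun a => ∑' x, a x • e x
      map_add' := fun a b => by
        rw [← (summable_smul he a).tsum_add (summable_smul he b)]
        exact tsum_congr fun x => add_smul (a x) (b x) (e x)
      map_smul' := fun c a => by
        rw [RingHom.id_apply, ← (summable_smul he a).tsum_const_smul]
        exact tsum_congr fun x => smul_assoc c (a x) (e x) }
    1 fun a => by
      rw [one_mul]
      refine tsum_of_norm_bounded (hasSum_norm a) fun x => ?_
      rw [norm_smul]
      exact mul_le_of_le_one_right (norm_nonneg _) (he x)

theorem lift_single (he : ∀ x, ‖e x‖ ≤ 1) (x : M) : lift e he (single x) = e x := by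
  refine (tsum_eq_single x fun y hy => ?_).trans ?_
  · rw [single_apply, if_neg hy, zero_smul]
  · rw [single_apply, if_pos rfl, one_smul]

theorem norm_lift_le (he : ∀ x, ‖e x‖ ≤ 1) : ‖lift e he‖ ≤ 1 :=
  LinearMap.mkContinuous_norm_le _ zero_le_one _

end NormedSpace

section Convolution

variable {M : Type*} [AddMonoid M]

/-- Convolution, the bounded bilinear extension of `single x * single y = single (x + y)`. -/
def convolution (M : Type*) [AddMonoid M] :
    LOneMonoidAlgebra M →L[ℂ] LOneMonoidAlgebra M →L[ℂ] LOneMonoidAlgebra M :=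
  lift (fun x => lift (fun y => single (x + y)) fun y => (norm_single (x + y)).le)
    fun _ => norm_lift_le _

theorem convolution_single (x y : M) :
    convolution M (single x) (single y) = single (x + y) := by
  rw [convolution, lift_single, lift_single]

theorem convolution_single_zero_left (a : LOneMonoidAlgebra M) :
    convolution M (single 0) a = a :=
  map_eq_of_map_single_eq (L' := .id ℂ _)
    (fun x => by rw [convolution_single, zero_add, ContinuousLinearMap.id_apply]) a

theorem convolution_single_zero_right (a : LOneMonoidAlgebra M) :
    convolution M a (single 0) = a :=
  map_eq_of_map_single_eq (L := (convolution M).flip (single 0)) (L' := .id ℂ _)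
    (fun x => by
      rw [ContinuousLinearMap.flip_apply, convolution_single, add_zero,
        ContinuousLinearMap.id_apply]) a

theorem convolution_assoc (a b c : LOneMonoidAlgebra M) :
    convolution M (convolution M a b) c = convolution M a (convolution M b c) := by
  have hsingle₂ : ∀ x y c, convolution M (convolution M (single x) (single y)) c =
      convolution M (single x) (convolution M (single y) c) := fun x y =>
    map_eq_of_map_single_eq (L' := (convolution M (single x)).comp (convolution M (single y)))
      fun z => by simp only [ContinuousLinearMap.comp_apply, convolution_single, add_assoc]
  have hsingle : ∀ x, convolution M (convolution M (single x) b) c =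
      convolution M (single x) (convolution M b c) := fun x =>
    map_eq_of_map_single_eq (L := ((convolution M).flip c).comp (convolution M (single x)))
      (L' := (convolution M (single x)).comp ((convolution M).flip c)) (hsingle₂ x · c) b
  exact map_eq_of_map_single_eq (L := ((convolution M).flip c).comp ((convolution M).flip b))
    (L' := (convolution M).flip (convolution M b c)) hsingle a

theorem norm_convolution_le (a b : LOneMonoidAlgebra M) : ‖convolution M a b‖ ≤ ‖a‖ * ‖b‖ := by
  simpa only [one_mul] using (convolution M).le_of_opNorm₂_le_of_le (norm_lift_le _) le_rfl le_rfl

instance : NormedRing (LOneMonoidAlgebra M) where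
  __ := (inferInstance : NormedAddCommGroup (LOneMonoidAlgebra M))
  one := single 0
  mul a b := convolution M a b
  left_distrib a b c := map_add (convolution M a) b c
  right_distrib a b c := (convolution M).map_add₂ a b c
  zero_mul a := (convolution M).map_zero₂ a
  mul_zero a := map_zero (convolution M a)
  mul_assoc := convolution_assoc
  one_mul := convolution_single_zero_left
  mul_one := convolution_single_zero_right
  norm_mul_le := norm_convolution_le

instance : NormOneClass (LOneMonoidAlgebra M) := ⟨norm_single 0⟩

instance : Algebra ℂ (LOneMonoidAlgebra M) :=
  .ofModule (fun c a b => (convolution M).map_smul₂ c a b)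
    fun c a b => map_smul (convolution M a) c b

instance : NormedAlgebra ℂ (LOneMonoidAlgebra M) where
  norm_smul_le := norm_smul_le

theorem single_mul_single (x y : M) : single x * single y = single (x + y) :=
  convolution_single x y

theorem map_mul_of_map_single_mul {A : Type*} [NormedRing A] [NormedAlgebra ℂ A]
    {L : LOneMonoidAlgebra M →L[ℂ] A}
    (h : ∀ x y, L (single (x + y)) = L (single x) * L (single y)) (a b : LOneMonoidAlgebra M) :
    L (a * b) = L a * L b := by
  have hsingle : ∀ x, L (single x * b) = L (single x) * L b := fun x =>
    map_eq_of_map_single_eq (L := L.comp (convolution M (single x)))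
      (L' := (ContinuousLinearMap.mul ℂ A (L (single x))).comp L)
      (fun y => by
        rw [ContinuousLinearMap.comp_apply, convolution_single, h, ContinuousLinearMap.comp_apply,
          ContinuousLinearMap.mul_apply']) b
  exact map_eq_of_map_single_eq (L := L.comp ((convolution M).flip b))
    (L' := ((ContinuousLinearMap.mul ℂ A).flip (L b)).comp L) hsingle a

end Convolution

section Characters

variable {M : Type*} [AddMonoid M]

open WeakDual

/-- The restriction of a character of the convolution algebra `ℓ¹(M, ℂ)` to the basis vectors. -/
def restrictSingle (φ : characterSpace ℂ (LOneMonoidAlgebra M)) : unitSemicharacters M :=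
  ⟨fun x => φ (single x), map_one φ,
    fun x y => (congrArg φ (single_mul_single x y)).symm.trans (map_mul φ _ _),
    fun x => (AlgHom.norm_apply_le_self φ (single x)).trans_eq (norm_single x)⟩

theorem continuous_restrictSingle : Continuous (restrictSingle (M := M)) :=
  Continuous.subtype_mk (continuous_pi fun x =>
    (eval_continuous (single x)).comp continuous_subtype_val) _

theorem restrictSingle_bijective : Function.Bijective (restrictSingle (M := M)) := by
  refine ⟨fun φ ψ h => ?_, fun χ => ?_⟩
  · have hsingle : ∀ x, φ (single x) = ψ (single x) := fun x => congrFun (congrArg Subtype.val h) x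
    exact DFunLike.ext _ _ <| map_eq_of_map_single_eq (L := CharacterSpace.toCLM φ)
      (L' := CharacterSpace.toCLM ψ) hsingle
  · let f : LOneMonoidAlgebra M →ₐ[ℂ] ℂ := AlgHom.ofLinearMap (lift χ χ.2.2.2)
      ((lift_single _ 0).trans χ.2.1)
      (map_mul_of_map_single_mul fun x y => by simp only [lift_single, χ.2.2.1])
    exact ⟨CharacterSpace.equivAlgHom.symm f, Subtype.ext (funext (lift_single χ.2.2.2))⟩

/-- The characters of the convolution algebra `ℓ¹(M, ℂ)` are the semicharacters of `M`. -/
def characterSpaceHomeomorph :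
    characterSpace ℂ (LOneMonoidAlgebra M) ≃ₜ unitSemicharacters M :=
  continuous_restrictSingle.homeoOfEquivCompactToT2
    (f := Equiv.ofBijective restrictSingle restrictSingle_bijective)

end Characters

end LOneMonoidAlgebra

end LOneMonoidAlgebra

section WienerAlgebra

open LOneMonoidAlgebra WeakDual

variable {k : ℕ}

section WienerSeries

variable {M : Type*} {j : M → Fin k → ℝ}

instance : CompleteSpace (APalg k) := isClosed_APalg.completeSpace_coe

/-- The absolutely convergent series `∑ x, a x • e_{j x}` of exponentials with frequencies `j`. -/
def wienerSeries (j : M → Fin k → ℝ) : LOneMonoidAlgebra M →L[ℂ] APalg k :=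
  lift (fun x => ⟨apExp k (j x), apExp_mem_APalg _⟩) fun x => (norm_apExp (j x)).le

theorem wienerSeries_single (x : M) :
    wienerSeries j (single x) = ⟨apExp k (j x), apExp_mem_APalg _⟩ :=
  lift_single _ x

theorem hasSum_bohrCoeff_wienerSeries (a : LOneMonoidAlgebra M) (mu : Fin k → ℝ) :
    HasSum (fun x => if j x = mu then a x else 0) (bohrCoeff k (wienerSeries j a) mu) := by
  have h := (hasSum_single a).map ((bohrCoeffCLM mu).comp (wienerSeries j))
    (ContinuousLinearMap.continuous _)
  simpa only [Function.comp_def, map_smul, ContinuousLinearMap.comp_apply, wienerSeries_single,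
    bohrCoeffCLM_apply, bohrCoeff_apExp, smul_eq_mul, mul_ite, mul_one, mul_zero] using h

theorem bohrCoeff_wienerSeries (hj : Function.Injective j) (a : LOneMonoidAlgebra M) (x : M) :
    bohrCoeff k (wienerSeries j a) (j x) = a x := by
  rw [← (hasSum_bohrCoeff_wienerSeries a (j x)).tsum_eq, tsum_eq_single x fun y hy =>
    if_neg (mt (@hj y x) hy), if_pos rfl]

theorem bohrCoeff_wienerSeries_of_notMem_range (a : LOneMonoidAlgebra M) {mu : Fin k → ℝ}
    (hmu : mu ∉ Set.range j) : bohrCoeff k (wienerSeries j a) mu = 0 := by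
  have hne : ∀ x, j x ≠ mu := not_exists.1 hmu
  rw [← (hasSum_bohrCoeff_wienerSeries a mu).tsum_eq]
  simp only [hne, if_false, tsum_zero]

theorem wienerSeries_injective (hj : Function.Injective j) :
    Function.Injective (wienerSeries j) := fun a b h =>
  DFunLike.ext _ _ fun x => by
    rw [← bohrCoeff_wienerSeries hj a x, h, bohrCoeff_wienerSeries hj]

theorem APWmem_wienerSeries (hj : Function.Injective j) (a : LOneMonoidAlgebra M) :
    APWmem k (Set.range j) (wienerSeries j a) := by
  have hoff : ∀ mu ∉ Set.range j, bohrCoeff k (wienerSeries j a) mu = 0 := fun mu =>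
    bohrCoeff_wienerSeries_of_notMem_range a
  refine ⟨⟨(wienerSeries j a).2, fun mu => not_imp_comm.1 (hoff mu)⟩, ?_⟩
  refine (hj.summable_iff fun mu hmu => ?_).1 <|
    (hasSum_norm a).summable.congr fun x => (congrArg norm (bohrCoeff_wienerSeries hj a x)).symm
  rw [hoff mu hmu, norm_zero]

theorem exists_wienerSeries_eq (hj : Function.Injective j) {f : APB k}
    (hf : APWmem k (Set.range j) f) : ∃ a, (wienerSeries j a : APB k) = f := by
  obtain ⟨⟨hfAP, hspec⟩, hsum⟩ := hf
  have hsum_j : Summable fun x => ‖bohrCoeff k f (j x)‖ := hsum.comp_injective hj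
  let a : LOneMonoidAlgebra M := ⟨fun x => bohrCoeff k f (j x), memℓp_gen (by simpa using hsum_j)⟩
  have hcoeff : ∀ mu, bohrCoeffCLM mu (wienerSeries j a) = bohrCoeff k f mu := fun mu => by
    by_cases hmu : mu ∈ Set.range j
    · obtain ⟨x, rfl⟩ := hmu
      exact bohrCoeff_wienerSeries hj a x
    · exact (bohrCoeff_wienerSeries_of_notMem_range a hmu).trans
        (not_not.1 (mt (@hspec mu) hmu)).symm
  refine ⟨a, sub_eq_zero.1 (eq_zero_of_bohrCoeff_eq_zero (sub_mem (wienerSeries j a).2 hfAP)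
    fun mu => ?_)⟩
  exact (map_sub (bohrCoeffCLM mu) (wienerSeries j a) ⟨f, hfAP⟩).trans (sub_eq_zero.2 (hcoeff mu))

theorem wienerSeries_mul [AddMonoid M] (j : M →+ Fin k → ℝ) (a b : LOneMonoidAlgebra M) :
    wienerSeries j (a * b) = wienerSeries j a * wienerSeries j b :=
  map_mul_of_map_single_mul (fun x y => by
    simp only [wienerSeries_single, map_add]
    exact Subtype.ext (apExp_add (j x) (j y))) a b

end WienerSeries

/-- Bohr-Fourier series identify the convolution algebra `ℓ¹(Δ, ℂ)` with the Wiener algebra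
`APW^k_Δ`. -/
def wienerEquiv (Δ : AddSubmonoid (Fin k → ℝ)) : LOneMonoidAlgebra Δ ≃ {f | APWmem k Δ f} :=
  Equiv.ofBijective
    (fun a => ⟨wienerSeries Δ.subtype a, by
      simpa using APWmem_wienerSeries (j := Δ.subtype) Subtype.val_injective a⟩)
    ⟨fun _ _ h => wienerSeries_injective Subtype.val_injective (Subtype.ext (Subtype.mk.inj h)),
      fun f => (exists_wienerSeries_eq (j := Δ.subtype) Subtype.val_injective (by
        rw [AddSubmonoid.coe_subtype, Subtype.range_coe]
        exact f.2)).imp fun _ ha => Subtype.ext ha⟩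

variable {Δ : AddSubmonoid (Fin k → ℝ)}

theorem wienerEquiv_add (a b : LOneMonoidAlgebra Δ) :
    (wienerEquiv Δ (a + b) : APB k) = wienerEquiv Δ a + wienerEquiv Δ b :=
  congrArg Subtype.val (map_add (wienerSeries Δ.subtype) a b)

theorem wienerEquiv_smul (c : ℂ) (a : LOneMonoidAlgebra Δ) :
    (wienerEquiv Δ (c • a) : APB k) = c • (wienerEquiv Δ a : APB k) :=
  congrArg Subtype.val (map_smul (wienerSeries Δ.subtype) c a)

theorem wienerEquiv_mul (a b : LOneMonoidAlgebra Δ) :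
    (wienerEquiv Δ (a * b) : APB k) = wienerEquiv Δ a * wienerEquiv Δ b :=
  congrArg Subtype.val (wienerSeries_mul Δ.subtype a b)

theorem mem_apCharacters_iff {φ : {f | APWmem k Δ f} → ℂ} :
    φ ∈ apCharacters k {f | APWmem k Δ f} ↔
      φ ∘ wienerEquiv Δ ≠ 0 ∧
      (∀ a b, φ (wienerEquiv Δ (a + b)) = φ (wienerEquiv Δ a) + φ (wienerEquiv Δ b)) ∧
      (∀ c a, φ (wienerEquiv Δ (c • a)) = c * φ (wienerEquiv Δ a)) ∧
      ∀ a b, φ (wienerEquiv Δ (a * b)) = φ (wienerEquiv Δ a) * φ (wienerEquiv Δ b) := by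
  have hsurj := (wienerEquiv Δ).surjective
  refine and_congr ?_ (and_congr ?_ (and_congr ?_ ?_))
  · simp only [ne_eq, funext_iff, hsurj.forall, Function.comp_apply, Pi.zero_apply]
  · simp only [hsurj.forall, ← wienerEquiv_add, Subtype.coe_eta, Subtype.coe_prop, forall_const]
  · simp only [hsurj.forall, ← wienerEquiv_smul, Subtype.coe_eta, Subtype.coe_prop, forall_const]
  · simp only [hsurj.forall, ← wienerEquiv_mul, Subtype.coe_eta, Subtype.coe_prop, forall_const]

/-- The functional on `APW^k_Δ` corresponding to a character of `ℓ¹(Δ, ℂ)`. -/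
def toApCharacter (ψ : characterSpace ℂ (LOneMonoidAlgebra Δ)) :
    apCharacters k {f | APWmem k Δ f} :=
  ⟨fun f => ψ ((wienerEquiv Δ).symm f), mem_apCharacters_iff.2 (by
    simp only [Function.comp_def, Equiv.symm_apply_apply]
    exact ⟨fun h => one_ne_zero ((map_one ψ).symm.trans (congrFun h 1)), map_add ψ, map_smul ψ,
      map_mul ψ⟩)⟩

theorem toApCharacter_wienerEquiv (ψ : characterSpace ℂ (LOneMonoidAlgebra Δ))
    (a : LOneMonoidAlgebra Δ) :
    (toApCharacter ψ : {f | APWmem k Δ f} → ℂ) (wienerEquiv Δ a) = ψ a :=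
  congrArg ψ ((wienerEquiv Δ).symm_apply_apply a)

theorem continuous_toApCharacter : Continuous (toApCharacter (Δ := Δ)) :=
  Continuous.subtype_mk (continuous_pi fun f =>
    (eval_continuous ((wienerEquiv Δ).symm f)).comp continuous_subtype_val) _

theorem toApCharacter_bijective : Function.Bijective (toApCharacter (Δ := Δ)) := by
  refine ⟨fun ψ ψ' h => DFunLike.ext _ _ fun a => ?_, fun ⟨φ, hφ⟩ => ?_⟩
  · rw [← toApCharacter_wienerEquiv ψ, h, toApCharacter_wienerEquiv]
  · obtain ⟨hne, hadd, hsmul, hmul⟩ := mem_apCharacters_iff.1 hφ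
    obtain ⟨a, ha⟩ := Function.ne_iff.1 hne
    have hone : φ (wienerEquiv Δ 1) = 1 :=
      (mul_eq_left₀ ha).1 ((hmul a 1).symm.trans (by rw [mul_one]; rfl))
    let F : LOneMonoidAlgebra Δ →ₐ[ℂ] ℂ := AlgHom.ofLinearMap
      { toFun := φ ∘ wienerEquiv Δ, map_add' := hadd, map_smul' := hsmul } hone hmul
    exact ⟨CharacterSpace.equivAlgHom.symm F, Subtype.ext <| funext fun f =>
      congrArg φ ((wienerEquiv Δ).apply_symm_apply f)⟩

/-- The maximal ideal spaces of `ℓ¹(Δ, ℂ)` and `APW^k_Δ` agree. -/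
def apCharactersHomeomorph (Δ : AddSubmonoid (Fin k → ℝ)) :
    characterSpace ℂ (LOneMonoidAlgebra Δ) ≃ₜ apCharacters k {f | APWmem k Δ f} :=
  continuous_toApCharacter.homeoOfEquivCompactToT2
    (f := Equiv.ofBijective toApCharacter toApCharacter_bijective)

end WienerAlgebra

theorem apw_characterSpace_contractible_general {k : ℕ} {C : PointedCone ℝ (Fin k → ℝ)}
    (hC : (C : ConvexCone ℝ (Fin k → ℝ)).Salient) {Δ : AddSubmonoid (Fin k → ℝ)}
    (hΔ : ∀ x ∈ Δ, x ∈ C) : ContractibleSpace (apCharacters k {f | APWmem k Δ f}) := by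
  have : ContractibleSpace (unitSemicharacters Δ) :=
    unitSemicharacters.contractibleSpace_of_salient hC (j := Δ.subtype) (fun x => hΔ x x.2)
      fun x hx => Subtype.ext hx
  exact ((apCharactersHomeomorph Δ).symm.trans
    LOneMonoidAlgebra.characterSpaceHomeomorph).contractibleSpace

/-- A halfspace as a cone over the nonnegative reals. -/
def IsHalfspace.toPointedCone {k : ℕ} {S : Set (Fin k → ℝ)} (hS : IsHalfspace k S) :
    PointedCone ℝ (Fin k → ℝ) where
  carrier := S
  add_mem' := fun {x y} => (hS.add_mem x · y ·)
  zero_mem' := (hS.inter.ge rfl).1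
  smul_mem' := fun c x hx => hS.smul_mem x hx c c.2

theorem IsHalfspace.salient_toPointedCone {k : ℕ} {S : Set (Fin k → ℝ)} (hS : IsHalfspace k S) :
    (hS.toPointedCone : ConvexCone ℝ (Fin k → ℝ)).Salient :=
  (PointedCone.salient_iff_inter_neg_eq_singleton _).2 hS.inter

/-- **Contractibility of `M(APW^k_Σ)`** (Theorem 3.1 for `APW`).  Let `S ⊂ ℝ^k`
be a halfspace and `Σ ⊆ S` an additive semigroup containing `0`.  Then the
maximal ideal space of the Wiener algebra `APW^k_Σ` is contractible. -/
theorem apw_characterSpace_contractible (k : ℕ) (S Sg : Set (Fin k → ℝ))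
    (hS : IsHalfspace k S) (hSgS : Sg ⊆ S) (h0 : (0 : Fin k → ℝ) ∈ Sg)
    (hadd : ∀ x ∈ Sg, ∀ y ∈ Sg, x + y ∈ Sg) :
    ContractibleSpace ↥(apCharacters k {f | APWmem k Sg f}) :=
  apw_characterSpace_contractible_general hS.salient_toPointedCone
    (Δ := { carrier := Sg, add_mem' := (hadd _ · _ ·), zero_mem' := h0 }) hSgS
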